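/- Let N = (n_ij) be a real 3×3 matrix such that for every μ ∈ ℝ³ the vector σ(μ) defined by σ_i(μ) = 4·Σ_{j=1}^{3} n_ij μ_j satisfies the Pohozaev identity for μ. Then (n11 − n31)² + (n21 − n31)² = n11, (n12 − n32)² + (n22 − n32)² = n22, and (n13 − n33)² + (n23 − n33)² = 2·n33. If moreover all n_ij are integers, then n13 and n23 are even. -/

import Mathlib

/-- The Pohozaev identity for `μ`. -/
def Poho (μ σ : Fin 3 → ℝ) : Prop :=
  (σ 0 - σ 2) ^ 2 + (σ 1 - σ 2) ^ 2 = 4 * (μ 0 * σ 0 + μ 1 * σ 1 + 2 * μ 2 * σ 2)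

/-!
The Pohozaev identity reads `σᵀ G σ = 4 μᵀ D σ`, where `D = diag(1, 1, 2)` symmetrizes the Cartan
matrix `A` and `G = D A`. Substituting `σ = 4 N μ` for every `μ` says that `Nᵀ G N` and `D N` define
the same quadratic form. Their diagonal entries therefore agree, and polarization gives
`2 Nᵀ G N = D N + (D N)ᵀ`. Where row `i` has weight `1` and column `j` has weight `2`, this becomes
`N i j = 2 ((Nᵀ G N) i j - N j i)`, whence the parity statement.
-/

open Matrix

section QuadraticForm

variable {n R : Type*} [Fintype n] [CommRing R] {A B : Matrix n n R}

theorem apply_self_eq_of_forall_dotProduct_mulVec_self_eq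
    (h : ∀ x, x ⬝ᵥ A *ᵥ x = x ⬝ᵥ B *ᵥ x) (i : n) : A i i = B i i := by
  classical
  simpa using h (Pi.single i 1)

theorem add_transpose_eq_of_forall_dotProduct_mulVec_self_eq
    (h : ∀ x, x ⬝ᵥ A *ᵥ x = x ⬝ᵥ B *ᵥ x) : A + Aᵀ = B + Bᵀ := by
  classical
  ext i j
  have hpolar := h (Pi.single i 1 + Pi.single j 1)
  simp only [mulVec_add, dotProduct_add, add_dotProduct, mulVec_single_one,
    single_one_dotProduct, col_apply,
    apply_self_eq_of_forall_dotProduct_mulVec_self_eq h] at hpolar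
  simp only [Matrix.add_apply, transpose_apply]
  linear_combination hpolar

end QuadraticForm

section Symmetrizer

variable {n R : Type*} [Fintype n] [CommRing R] {G N : Matrix n n R}

theorem transpose_mul_mul_apply_mem (S : Subring R) (hG : ∀ k l, G k l ∈ S) {i j : n}
    (hi : ∀ k, N k i ∈ S) (hj : ∀ k, N k j ∈ S) : (Nᵀ * G * N) i j ∈ S :=
  S.sum_mem fun l _ => S.mul_mem (S.sum_mem fun k _ => S.mul_mem (hi k) (hG k l)) (hj l)

variable [DecidableEq n] {d : n → R}

theorem two_mul_transpose_mul_mul_apply (hG : G.IsSymm)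
    (h : ∀ x, x ⬝ᵥ (Nᵀ * G * N) *ᵥ x = x ⬝ᵥ (diagonal d * N) *ᵥ x) (i j : n) :
    2 * (Nᵀ * G * N) i j = d i * N i j + d j * N j i := by
  have hsymm : (Nᵀ * G * N)ᵀ = Nᵀ * G * N := by
    simp only [transpose_mul, transpose_transpose, hG.eq, Matrix.mul_assoc]
  have hpolar := congrFun₂ (add_transpose_eq_of_forall_dotProduct_mulVec_self_eq h) i j
  rwa [hsymm, Matrix.add_apply, ← two_mul, Matrix.add_apply, transpose_apply, diagonal_mul,
    diagonal_mul] at hpolar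

theorem exists_mem_apply_eq_two_mul (S : Subring R) (hG : G.IsSymm) (hGS : ∀ k l, G k l ∈ S)
    (h : ∀ x, x ⬝ᵥ (Nᵀ * G * N) *ᵥ x = x ⬝ᵥ (diagonal d * N) *ᵥ x) {i j : n}
    (hdi : d i = 1) (hdj : d j = 2) (hi : ∀ k, N k i ∈ S) (hj : ∀ k, N k j ∈ S) :
    ∃ z ∈ S, N i j = 2 * z := by
  refine ⟨(Nᵀ * G * N) i j - N j i,
    S.sub_mem (transpose_mul_mul_apply_mem S hGS hi hj) (hi j), ?_⟩
  have hpolar := two_mul_transpose_mul_mul_apply hG h i j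
  rw [hdi, hdj] at hpolar
  linear_combination -hpolar

end Symmetrizer

section Pohozaev

/-- The matrix `A` obtained by normalizing the Cartan matrix of the affine Lie algebra `B₂⁽¹⁾` to
have diagonal entries `1`. -/
noncomputable def affineCartan : Matrix (Fin 3) (Fin 3) ℝ :=
  !![1, 0, -1; 0, 1, -1; -1 / 2, -1 / 2, 1]

/-- The diagonal of the matrix `D` for which `D A` is symmetric, with `A = affineCartan`. -/
def symmetrizer : Fin 3 → ℝ :=
  ![1, 1, 2]

/-- The symmetrized Cartan matrix `D A`, the Gram matrix of the quadratic form on the left-hand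
side of the Pohozaev identity. -/
noncomputable def symmCartan : Matrix (Fin 3) (Fin 3) ℝ :=
  diagonal symmetrizer * affineCartan

theorem symmCartan_eq : symmCartan = !![1, 0, -1; 0, 1, -1; -1, -1, 2] := by
  ext i j
  fin_cases i <;> fin_cases j <;> norm_num [symmCartan, symmetrizer, affineCartan]

theorem isSymm_symmCartan : symmCartan.IsSymm := by
  rw [symmCartan_eq]
  ext i j
  fin_cases i <;> fin_cases j <;> rfl

theorem symmCartan_apply_mem (S : Subring ℝ) (k l : Fin 3) : symmCartan k l ∈ S := by
  rw [symmCartan_eq]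
  fin_cases k <;> fin_cases l <;> simp [S.zero_mem, S.one_mem]

theorem dotProduct_symmCartan_mulVec (σ τ : Fin 3 → ℝ) :
    σ ⬝ᵥ symmCartan *ᵥ τ = (σ 0 - σ 2) * (τ 0 - τ 2) + (σ 1 - σ 2) * (τ 1 - τ 2) := by
  simp only [symmCartan_eq, dotProduct, mulVec, Fin.sum_univ_three, of_apply, cons_val]
  ring

theorem poho_iff_dotProduct {μ σ : Fin 3 → ℝ} :
    Poho μ σ ↔ σ ⬝ᵥ symmCartan *ᵥ σ = 4 * (μ ⬝ᵥ diagonal symmetrizer *ᵥ σ) := by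
  have hright : μ ⬝ᵥ diagonal symmetrizer *ᵥ σ = μ 0 * σ 0 + μ 1 * σ 1 + 2 * μ 2 * σ 2 := by
    simp only [dotProduct, mulVec_diagonal, Fin.sum_univ_three, symmetrizer, cons_val]
    ring
  rw [Poho, dotProduct_symmCartan_mulVec, hright, sq, sq]

variable {N : Matrix (Fin 3) (Fin 3) ℝ}

theorem poho_four_smul_mulVec_iff {μ : Fin 3 → ℝ} :
    Poho μ ((4 : ℝ) • N *ᵥ μ) ↔
      μ ⬝ᵥ (Nᵀ * symmCartan * N) *ᵥ μ = μ ⬝ᵥ (diagonal symmetrizer * N) *ᵥ μ := by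
  have hleft : μ ⬝ᵥ (Nᵀ * symmCartan * N) *ᵥ μ = (N *ᵥ μ) ⬝ᵥ symmCartan *ᵥ (N *ᵥ μ) := by
    rw [← mulVec_mulVec, ← mulVec_mulVec, dotProduct_mulVec, vecMul_transpose]
  rw [poho_iff_dotProduct, hleft, ← mulVec_mulVec]
  simp only [mulVec_smul, smul_dotProduct, dotProduct_smul, smul_eq_mul]
  constructor <;> intro h <;> linarith

theorem transpose_mul_symmCartan_mul_apply (i j : Fin 3) :
    (Nᵀ * symmCartan * N) i j =
      (N 0 i - N 2 i) * (N 0 j - N 2 j) + (N 1 i - N 2 i) * (N 1 j - N 2 j) := by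
  rw [Matrix.mul_assoc]
  exact dotProduct_symmCartan_mulVec (N.col i) (N.col j)

theorem sq_add_sq_eq_symmetrizer_mul
    (h : ∀ μ, μ ⬝ᵥ (Nᵀ * symmCartan * N) *ᵥ μ = μ ⬝ᵥ (diagonal symmetrizer * N) *ᵥ μ)
    (i : Fin 3) :
    (N 0 i - N 2 i) ^ 2 + (N 1 i - N 2 i) ^ 2 = symmetrizer i * N i i := by
  rw [sq, sq, ← transpose_mul_symmCartan_mul_apply,
    apply_self_eq_of_forall_dotProduct_mulVec_self_eq h, diagonal_mul]

end Pohozaev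

/-- If `σ_i(μ) = 4 ∑_j n_{ij} μ_j` satisfies the Pohozaev identity for every `μ`, then
the coefficients satisfy `(n₁₁−n₃₁)² + (n₂₁−n₃₁)² = n₁₁`, `(n₁₂−n₃₂)² + (n₂₂−n₃₂)² = n₂₂`
and `(n₁₃−n₃₃)² + (n₂₃−n₃₃)² = 2n₃₃`; if moreover all `n_{ij}` are integers, then
`n₁₃` and `n₂₃` are even. -/
theorem pohozaev_coefficient_identities (N : Matrix (Fin 3) (Fin 3) ℝ)
    (h : ∀ μ : Fin 3 → ℝ, Poho μ (fun i => 4 * ∑ j, N i j * μ j)) :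
    ((N 0 0 - N 2 0) ^ 2 + (N 1 0 - N 2 0) ^ 2 = N 0 0 ∧
     (N 0 1 - N 2 1) ^ 2 + (N 1 1 - N 2 1) ^ 2 = N 1 1 ∧
     (N 0 2 - N 2 2) ^ 2 + (N 1 2 - N 2 2) ^ 2 = 2 * N 2 2) ∧
    ((∀ i j, ∃ z : ℤ, N i j = (z : ℝ)) →
      (∃ z : ℤ, N 0 2 = 2 * (z : ℝ)) ∧ (∃ z : ℤ, N 1 2 = 2 * (z : ℝ))) := by
  have hform (μ : Fin 3 → ℝ) : μ ⬝ᵥ (Nᵀ * symmCartan * N) *ᵥ μ =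
      μ ⬝ᵥ (diagonal symmetrizer * N) *ᵥ μ :=
    poho_four_smul_mulVec_iff.mp (h μ)
  have hsq := sq_add_sq_eq_symmetrizer_mul hform
  refine ⟨⟨by simpa [symmetrizer] using hsq 0, by simpa [symmetrizer] using hsq 1,
    by simpa [symmetrizer] using hsq 2⟩, fun hN => ?_⟩
  let S : Subring ℝ := (Int.castRingHom ℝ).range
  have hNS (i j : Fin 3) : N i j ∈ S := (hN i j).imp fun _ hz => hz.symm
  have heven {i : Fin 3} (hi : symmetrizer i = 1) : ∃ z : ℤ, N i 2 = 2 * (z : ℝ) := by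
    obtain ⟨_, ⟨z, rfl⟩, hz⟩ := exists_mem_apply_eq_two_mul S isSymm_symmCartan
      (symmCartan_apply_mem S) hform hi rfl (hNS · i) (hNS · 2)
    exact ⟨z, hz⟩
  exact ⟨heven rfl, heven rfl⟩
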